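/- Let k be a positive integer and let p be a prime with p ≡ 5 (mod 6). Then for all integers n ≥ 0, B̄_{2,9}( 6p^{2k} n + p^{2k} ) ≡ (−p)^k · B̄_{2,9}(6n+1) (mod 8). -/

import Mathlib

/-- `biregOverpartitions l1 l2 n` is the number of `(l1, l2)`-biregular overpartitions of `n`:
overpartitions of `n` (partitions in which the first occurrence of each part size may be
overlined) none of whose parts is divisible by `l1` or by `l2`.  Each partition of `n` with
admissible parts contributes `2 ^ (number of distinct part sizes)` overpartitions,
corresponding to the choice of which part sizes have their first occurrence overlined. -/
def biregOverpartitions (l1 l2 n : ℕ) : ℕ :=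
  ∑ p : Nat.Partition n,
    if ∀ x ∈ p.parts, ¬ l1 ∣ x ∧ ¬ l2 ∣ x then 2 ^ p.parts.toFinset.card else 0

open Finset

/-- The divisors of `n` that are neither even nor divisible by `9`. -/
def admissibleDivisors (n : ℕ) : Finset ℕ :=
  n.divisors.filter fun a => ¬ 2 ∣ a ∧ ¬ 9 ∣ a

lemma mem_admissibleDivisors {n a : ℕ} :
    a ∈ admissibleDivisors n ↔ (a ∣ n ∧ n ≠ 0) ∧ ¬ 2 ∣ a ∧ ¬ 9 ∣ a := by
  simp [admissibleDivisors]

lemma div_ne_zero_of_mem_admissibleDivisors {n a : ℕ} (h : a ∈ admissibleDivisors n) :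
    n / a ≠ 0 := by
  have h' := (mem_filter.1 h).1
  exact (Nat.div_pos (Nat.divisor_le h') (Nat.pos_of_mem_divisors h')).ne'

lemma even_card_of_involution {s : Finset ℕ} (g : ℕ → ℕ) (hmem : ∀ a ∈ s, g a ∈ s)
    (hne : ∀ a ∈ s, g a ≠ a) (hinv : ∀ a ∈ s, g (g a) = a) : Even #s := by
  have h : ∑ _a ∈ s, (1 : ZMod 2) = 0 :=
    sum_involution (fun a _ => g a) (fun _ _ => by decide) (fun a ha _ => hne a ha)
      hmem hinv
  rw [sum_const, nsmul_one] at h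
  exact (ZMod.natCast_eq_zero_iff_even).1 h

lemma even_card_divisors_of_mod_three {n : ℕ} (hn : n % 3 = 2) : Even #n.divisors := by
  refine even_card_of_involution (fun a => n / a) ?_ ?_ ?_
  · intro a ha
    exact Nat.mem_divisors.2 ⟨Nat.div_dvd_of_dvd (Nat.dvd_of_mem_divisors ha), by omega⟩
  · intro a ha h
    have h2 : a * a = n := by
      have := Nat.div_mul_cancel (Nat.dvd_of_mem_divisors ha)
      rwa [h] at this
    have h3 := Nat.mul_mod a a 3
    have : a % 3 < 3 := Nat.mod_lt _ (by norm_num)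
    rw [h2, hn] at h3
    interval_cases a % 3 <;> simp at h3
  · intro a ha
    exact Nat.div_div_self (Nat.dvd_of_mem_divisors ha) (by omega)

lemma even_card_admissibleDivisors_of_three_dvd {n : ℕ} (hn : 3 ∣ n) :
    Even #(admissibleDivisors n) := by
  refine even_card_of_involution (fun a => if 3 ∣ a then a / 3 else 3 * a) ?_ ?_ ?_
  · intro a ha
    rw [mem_admissibleDivisors] at ha ⊢
    obtain ⟨⟨h1, h0⟩, h2, h9⟩ := ha
    split_ifs with h
    · exact ⟨⟨(Nat.div_dvd_of_dvd h).trans h1, h0⟩, by omega, by omega⟩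
    · exact ⟨⟨Nat.Coprime.mul_dvd_of_dvd_of_dvd
        ((Nat.Prime.coprime_iff_not_dvd Nat.prime_three).2 h) hn h1, h0⟩, by omega, by omega⟩
  · intro a ha
    have : a ≠ 0 := by
      rintro rfl
      simp [mem_admissibleDivisors] at ha
    split_ifs <;> omega
  · intro a ha
    have h9 := (mem_admissibleDivisors.1 ha).2.2
    split_ifs <;> omega

lemma admissibleDivisors_eq_divisors {n : ℕ} (h2 : ¬ 2 ∣ n) (h3 : ¬ 3 ∣ n) :
    admissibleDivisors n = n.divisors := by
  refine filter_true_of_mem fun a ha => ?_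
  have h := Nat.dvd_of_mem_divisors ha
  exact ⟨fun h' => h2 (h'.trans h), fun h' => h3 ((show 3 ∣ 9 by norm_num).trans (h'.trans h))⟩

lemma even_card_mul_card_admissibleDivisors {i j : ℕ} (h : (i + j) % 6 = 1) :
    Even (#(admissibleDivisors i) * #(admissibleDivisors j)) := by
  rw [Nat.even_mul]
  by_cases hi : 3 ∣ i
  · exact .inl (even_card_admissibleDivisors_of_three_dvd hi)
  by_cases hj : 3 ∣ j
  · exact .inr (even_card_admissibleDivisors_of_three_dvd hj)
  by_cases hi2 : 2 ∣ i
  · right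
    rw [admissibleDivisors_eq_divisors (by omega) hj]
    exact even_card_divisors_of_mod_three (by omega)
  · left
    rw [admissibleDivisors_eq_divisors hi2 hi]
    exact even_card_divisors_of_mod_three (by omega)

lemma four_dvd_sum_card_mul_card {n : ℕ} (hn : n % 6 = 1) :
    4 ∣ ∑ ij ∈ antidiagonal n, #(admissibleDivisors ij.1) * #(admissibleDivisors ij.2) := by
  set f : ℕ × ℕ → ℕ := fun ij => #(admissibleDivisors ij.1) * #(admissibleDivisors ij.2)
  have hsplit := sum_filter_add_sum_filter_not (antidiagonal n) (fun ij => ij.1 < ij.2) f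
  have hswap : ∑ ij ∈ antidiagonal n with ¬ ij.1 < ij.2, f ij =
      ∑ ij ∈ antidiagonal n with ij.1 < ij.2, f ij := by
    refine sum_nbij' Prod.swap Prod.swap ?_ ?_ (by simp) (by simp) ?_
    · rintro ⟨i, j⟩ h
      simp only [mem_filter, HasAntidiagonal.mem_antidiagonal, Prod.swap] at h ⊢
      omega
    · rintro ⟨i, j⟩ h
      simp only [mem_filter, HasAntidiagonal.mem_antidiagonal, Prod.swap] at h ⊢
      omega
    · rintro ⟨i, j⟩ -
      exact mul_comm _ _
  have heven : 2 ∣ ∑ ij ∈ antidiagonal n with ij.1 < ij.2, f ij := by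
    refine dvd_sum fun ij h => (even_card_mul_card_admissibleDivisors ?_).two_dvd
    rwa [HasAntidiagonal.mem_antidiagonal.1 (mem_filter.1 h).1]
  change 4 ∣ ∑ ij ∈ antidiagonal n, f ij
  omega

/-- Pairs of admissible parts `a < b` together with multiples `i` of `a` and `j` of `b`
summing to `n`. -/
def twoSizeData (n : ℕ) : Finset (Σ _ : ℕ × ℕ, ℕ × ℕ) :=
  (antidiagonal n).sigma fun ij =>
    {ab ∈ admissibleDivisors ij.1 ×ˢ admissibleDivisors ij.2 | ab.1 < ab.2}

lemma card_common_multiples {n a : ℕ} (ha : a ∈ n.divisors) :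
    #{ij ∈ antidiagonal n | (a ∣ ij.1 ∧ ij.1 ≠ 0) ∧ (a ∣ ij.2 ∧ ij.2 ≠ 0)} = n / a - 1 := by
  obtain ⟨⟨c, rfl⟩, hn⟩ := Nat.mem_divisors.1 ha
  have ha0 : 0 < a := Nat.pos_of_ne_zero (left_ne_zero_of_mul hn)
  rw [Nat.mul_div_cancel_left _ ha0]
  have : c - 1 = #(Ioo 0 c) := by simp
  rw [this]
  symm
  refine card_bij (fun t _ => (a * t, a * (c - t))) ?_ ?_ ?_
  · intro t ht
    rw [mem_Ioo] at ht
    simp only [mem_filter, HasAntidiagonal.mem_antidiagonal, ← mul_add, dvd_mul_right, true_and, ne_eq,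
      mul_eq_zero, not_or]
    refine ⟨by congr 1; omega, ?_, ?_⟩ <;> omega
  · intro t _ t' _ h
    exact Nat.eq_of_mul_eq_mul_left ha0 (Prod.ext_iff.1 h).1
  · rintro ⟨i, j⟩ h
    simp only [mem_filter, HasAntidiagonal.mem_antidiagonal] at h
    obtain ⟨hs, ⟨⟨t, rfl⟩, ht⟩, ⟨u, rfl⟩, hu⟩ := h
    have hc : t + u = c := Nat.eq_of_mul_eq_mul_left ha0 (by rw [mul_add, hs])
    have ht0 := Nat.pos_of_ne_zero (right_ne_zero_of_mul ht)
    have hu0 := Nat.pos_of_ne_zero (right_ne_zero_of_mul hu)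
    refine ⟨t, mem_Ioo.2 ⟨ht0, by omega⟩, ?_⟩
    rw [← hc, Nat.add_sub_cancel_left]

lemma sum_card_inter_add_card_divisors {n : ℕ} (hn : n % 6 = 1) :
    ∑ ij ∈ antidiagonal n, #(admissibleDivisors ij.1 ∩ admissibleDivisors ij.2) + #n.divisors =
      ∑ a ∈ n.divisors, a := by
  have hinter : ∀ ij ∈ antidiagonal n, #(admissibleDivisors ij.1 ∩ admissibleDivisors ij.2) =
      #{a ∈ n.divisors | (a ∣ ij.1 ∧ ij.1 ≠ 0) ∧ (a ∣ ij.2 ∧ ij.2 ≠ 0)} := by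
    rintro ⟨i, j⟩ h
    rw [HasAntidiagonal.mem_antidiagonal] at h
    dsimp only at h ⊢
    congr 1
    ext a
    rw [mem_inter, mem_admissibleDivisors, mem_admissibleDivisors, mem_filter,
      ← admissibleDivisors_eq_divisors (n := n) (by omega) (by omega), mem_admissibleDivisors]
    have : a ∣ i → a ∣ j → a ∣ n := fun h1 h2 => h ▸ dvd_add h1 h2
    have : n ≠ 0 := by omega
    tauto
  rw [sum_congr rfl hinter]
  have hcomm := sum_card_bipartiteAbove_eq_sum_card_bipartiteBelow (s := antidiagonal n)
    (t := n.divisors) (fun ij a => (a ∣ ij.1 ∧ ij.1 ≠ 0) ∧ (a ∣ ij.2 ∧ ij.2 ≠ 0))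
  simp only [bipartiteAbove, bipartiteBelow] at hcomm
  rw [hcomm, sum_congr rfl fun a ha => card_common_multiples ha, card_eq_sum_ones,
    ← sum_add_distrib, ← Nat.sum_div_divisors n (fun a => a)]
  refine sum_congr rfl fun a ha => Nat.sub_add_cancel ?_
  exact Nat.div_pos (Nat.divisor_le ha) (Nat.pos_of_mem_divisors ha)

lemma two_mul_card_twoSizeData (n : ℕ) :
    2 * #(twoSizeData n) +
        ∑ ij ∈ antidiagonal n, #(admissibleDivisors ij.1 ∩ admissibleDivisors ij.2) =
      ∑ ij ∈ antidiagonal n, #(admissibleDivisors ij.1) * #(admissibleDivisors ij.2) := by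
  have hswap : ∑ ij ∈ antidiagonal n,
        #{ab ∈ admissibleDivisors ij.1 ×ˢ admissibleDivisors ij.2 | ab.1 < ab.2} =
      ∑ ij ∈ antidiagonal n,
        #{ab ∈ admissibleDivisors ij.1 ×ˢ admissibleDivisors ij.2 | ab.2 < ab.1} := by
    refine sum_nbij' Prod.swap Prod.swap ?_ ?_ (by simp) (by simp) ?_
    · rintro ⟨i, j⟩ h
      simpa [add_comm] using h
    · rintro ⟨i, j⟩ h
      simpa [add_comm] using h
    · rintro ⟨i, j⟩ -
      refine card_nbij' Prod.swap Prod.swap ?_ ?_ (fun _ _ => rfl) (fun _ _ => rfl)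
      · rintro ⟨a, b⟩ h
        simp at h ⊢
        tauto
      · rintro ⟨a, b⟩ h
        simp at h ⊢
        tauto
  rw [two_mul, twoSizeData, card_sigma]
  nth_rewrite 2 [hswap]
  rw [← sum_add_distrib, ← sum_add_distrib]
  refine sum_congr rfl fun ij _ => ?_
  rw [← card_product]
  generalize admissibleDivisors ij.1 = s
  generalize admissibleDivisors ij.2 = t
  have hdiag : #(s ∩ t) = #{ab ∈ s ×ˢ t | ab.1 = ab.2} := by
    refine card_nbij' (fun a => (a, a)) Prod.fst ?_ ?_ (fun _ _ => rfl) ?_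
    · intro a h
      simpa using h
    · rintro ⟨a, b⟩ h
      simp at h ⊢
      obtain ⟨h, rfl⟩ := h
      exact h
    · rintro ⟨a, b⟩ h
      simp at h ⊢
      exact h.2
  rw [hdiag, card_filter, card_filter, card_filter, ← sum_add_distrib, ← sum_add_distrib,
    card_eq_sum_ones]
  refine sum_congr rfl fun ab _ => ?_
  split_ifs <;> omega

/-- The partitions of `n` with exactly `r` part sizes, none divisible by `2` or `9`. -/
def sizePartitions (n r : ℕ) : Finset (Nat.Partition n) :=
  {P | (∀ x ∈ P.parts, ¬ 2 ∣ x ∧ ¬ 9 ∣ x) ∧ #P.parts.toFinset = r}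

lemma card_sizePartitions_one {n : ℕ} (hn : n ≠ 0) :
    #(sizePartitions n 1) = #(admissibleDivisors n) := by
  symm
  refine card_bij (fun a ha => ⟨Multiset.replicate (n / a) a, ?_, ?_⟩) ?_ ?_ ?_
  · intro x hx
    rw [Multiset.eq_of_mem_replicate hx]
    exact Nat.pos_of_mem_divisors (mem_filter.1 ha).1
  · rw [Multiset.sum_replicate, smul_eq_mul]
    exact Nat.div_mul_cancel (mem_admissibleDivisors.1 ha).1.1
  · intro a ha
    have h := mem_admissibleDivisors.1 ha
    have hpos := div_ne_zero_of_mem_admissibleDivisors ha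
    simp only [sizePartitions, mem_filter, mem_univ, true_and]
    refine ⟨fun x hx => Multiset.eq_of_mem_replicate hx ▸ h.2, ?_⟩
    rw [Multiset.toFinset_replicate, if_neg hpos, card_singleton]
  · intro a ha b hb hab
    have hmem : a ∈ Multiset.replicate (n / a) a :=
      Multiset.mem_replicate.2 ⟨div_ne_zero_of_mem_admissibleDivisors ha, rfl⟩
    have hparts : Multiset.replicate (n / a) a = Multiset.replicate (n / b) b :=
      congrArg Nat.Partition.parts hab
    rw [hparts] at hmem
    exact Multiset.eq_of_mem_replicate hmem
  · intro P hP
    simp only [sizePartitions, mem_filter, mem_univ, true_and] at hP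
    obtain ⟨hadm, hcard⟩ := hP
    obtain ⟨a, ha⟩ := card_eq_one.1 hcard
    have hmem : a ∈ P.parts := by
      rw [← Multiset.mem_toFinset, ha]
      exact mem_singleton_self a
    have hrep : P.parts = Multiset.replicate (Multiset.card P.parts) a := by
      refine Multiset.eq_replicate_card.2 fun x hx => ?_
      rwa [← Multiset.mem_toFinset, ha, mem_singleton] at hx
    have hsum : Multiset.card P.parts * a = n := by
      have := P.parts_sum
      rwa [hrep, Multiset.sum_replicate, smul_eq_mul] at this
    refine ⟨a, mem_admissibleDivisors.2 ⟨⟨⟨_, (mul_comm _ _).trans hsum |>.symm⟩, hn⟩,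
      hadm a hmem⟩, ?_⟩
    ext1
    have hdiv : n / a = Multiset.card P.parts :=
      Nat.div_eq_of_eq_mul_left (P.parts_pos hmem) hsum.symm
    change Multiset.replicate (n / a) a = P.parts
    rw [hdiv]
    exact hrep.symm

lemma mem_twoSizeData {n i j a b : ℕ} :
    (⟨(i, j), (a, b)⟩ : Σ _ : ℕ × ℕ, ℕ × ℕ) ∈ twoSizeData n ↔
      i + j = n ∧ (a ∈ admissibleDivisors i ∧ b ∈ admissibleDivisors j) ∧ a < b := by
  simp [twoSizeData]

lemma pair_eq_of_lt {a b c d : ℕ} (hab : a < b) (hcd : c < d)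
    (h : ({a, b} : Finset ℕ) = {c, d}) : a = c ∧ b = d := by
  have h1 : a ∈ ({c, d} : Finset ℕ) := h ▸ by simp
  have h2 : b ∈ ({c, d} : Finset ℕ) := h ▸ by simp
  simp only [mem_insert, mem_singleton] at h1 h2
  omega

lemma toFinset_replicate_add_replicate {m l a b : ℕ} (hm : m ≠ 0) (hl : l ≠ 0) :
    (Multiset.replicate m a + Multiset.replicate l b).toFinset = {a, b} := by
  rw [Multiset.toFinset_add, Multiset.toFinset_replicate, Multiset.toFinset_replicate,
    if_neg hm, if_neg hl]
  rfl

lemma card_sizePartitions_two (n : ℕ) : #(sizePartitions n 2) = #(twoSizeData n) := by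
  symm
  refine card_bij (fun d hd => ⟨Multiset.replicate (d.1.1 / d.2.1) d.2.1 +
    Multiset.replicate (d.1.2 / d.2.2) d.2.2, ?_, ?_⟩) ?_ ?_ ?_
  · obtain ⟨⟨i, j⟩, a, b⟩ := d
    obtain ⟨-, ⟨ha, hb⟩, -⟩ := mem_twoSizeData.1 hd
    intro x hx
    rcases Multiset.mem_add.1 hx with hx | hx <;> rw [Multiset.eq_of_mem_replicate hx]
    · exact Nat.pos_of_mem_divisors (mem_filter.1 ha).1
    · exact Nat.pos_of_mem_divisors (mem_filter.1 hb).1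
  · obtain ⟨⟨i, j⟩, a, b⟩ := d
    obtain ⟨h, ⟨ha, hb⟩, -⟩ := mem_twoSizeData.1 hd
    simp only [Multiset.sum_add, Multiset.sum_replicate, smul_eq_mul]
    rw [Nat.div_mul_cancel (mem_admissibleDivisors.1 ha).1.1,
      Nat.div_mul_cancel (mem_admissibleDivisors.1 hb).1.1, h]
  · rintro ⟨⟨i, j⟩, a, b⟩ hd
    obtain ⟨-, ⟨ha, hb⟩, hlt⟩ := mem_twoSizeData.1 hd
    simp only [sizePartitions, mem_filter, mem_univ, true_and]
    refine ⟨fun x hx => ?_, ?_⟩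
    · rcases Multiset.mem_add.1 hx with hx | hx <;> rw [Multiset.eq_of_mem_replicate hx]
      · exact (mem_admissibleDivisors.1 ha).2
      · exact (mem_admissibleDivisors.1 hb).2
    · rw [toFinset_replicate_add_replicate (div_ne_zero_of_mem_admissibleDivisors ha)
        (div_ne_zero_of_mem_admissibleDivisors hb)]
      exact card_pair hlt.ne
  · rintro ⟨⟨i, j⟩, a, b⟩ hd ⟨⟨i', j'⟩, a', b'⟩ hd' heq
    obtain ⟨-, ⟨ha, hb⟩, hlt⟩ := mem_twoSizeData.1 hd
    obtain ⟨-, ⟨ha', hb'⟩, hlt'⟩ := mem_twoSizeData.1 hd'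
    have hparts := congrArg Nat.Partition.parts heq
    dsimp only at hparts
    have hset := congrArg Multiset.toFinset hparts
    rw [toFinset_replicate_add_replicate (div_ne_zero_of_mem_admissibleDivisors ha)
        (div_ne_zero_of_mem_admissibleDivisors hb),
      toFinset_replicate_add_replicate (div_ne_zero_of_mem_admissibleDivisors ha')
        (div_ne_zero_of_mem_admissibleDivisors hb')] at hset
    obtain ⟨rfl, rfl⟩ := pair_eq_of_lt hlt hlt' hset
    have hca := congrArg (Multiset.count a) hparts
    have hcb := congrArg (Multiset.count b) hparts
    simp only [Multiset.count_add, Multiset.count_replicate, hlt.ne, hlt.ne', if_true, if_false,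
      add_zero, zero_add] at hca hcb
    rw [Nat.div_left_inj (mem_admissibleDivisors.1 ha).1.1
      (mem_admissibleDivisors.1 ha').1.1] at hca
    rw [Nat.div_left_inj (mem_admissibleDivisors.1 hb).1.1
      (mem_admissibleDivisors.1 hb').1.1] at hcb
    rw [hca, hcb]
  · intro P hP
    simp only [sizePartitions, mem_filter, mem_univ, true_and] at hP
    obtain ⟨hadm, hcard⟩ := hP
    obtain ⟨a, b, hlt, hset⟩ : ∃ a b, a < b ∧ P.parts.toFinset = {a, b} := by
      obtain ⟨a, b, hne, hset⟩ := card_eq_two.1 hcard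
      rcases hne.lt_or_gt with h | h
      · exact ⟨a, b, h, hset⟩
      · exact ⟨b, a, h, hset.trans (pair_comm a b)⟩
    have hmem : ∀ x, x ∈ P.parts ↔ x = a ∨ x = b := fun x => by
      rw [← Multiset.mem_toFinset, hset, mem_insert, mem_singleton]
    have ha := (hmem a).2 (.inl rfl)
    have hb := (hmem b).2 (.inr rfl)
    have ha0 := P.parts_pos ha
    have hb0 := P.parts_pos hb
    have hrep : P.parts = Multiset.replicate (P.parts.count a) a +
        Multiset.replicate (P.parts.count b) b := by
      ext x
      rw [Multiset.count_add, Multiset.count_replicate, Multiset.count_replicate]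
      by_cases hxa : x = a
      · subst hxa
        simp [hlt.ne']
      by_cases hxb : x = b
      · subst hxb
        simp [hlt.ne]
      · rw [Multiset.count_eq_zero.2 fun h => ((hmem x).1 h).elim hxa hxb,
          if_neg (Ne.symm hxa), if_neg (Ne.symm hxb)]
    have hsum : P.parts.count a * a + P.parts.count b * b = n := by
      have := congrArg Multiset.sum hrep
      rw [P.parts_sum, Multiset.sum_add, Multiset.sum_replicate, Multiset.sum_replicate] at this
      exact this.symm
    have hca := (Multiset.count_pos.2 ha).ne'
    have hcb := (Multiset.count_pos.2 hb).ne'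
    refine ⟨⟨(P.parts.count a * a, P.parts.count b * b), (a, b)⟩, mem_twoSizeData.2
      ⟨hsum, ⟨mem_admissibleDivisors.2 ⟨⟨dvd_mul_left _ _, mul_ne_zero hca ha0.ne'⟩, hadm a ha⟩,
        mem_admissibleDivisors.2 ⟨⟨dvd_mul_left _ _, mul_ne_zero hcb hb0.ne'⟩, hadm b hb⟩⟩,
        hlt⟩, ?_⟩
    ext1
    dsimp only
    rw [Nat.mul_div_cancel _ ha0, Nat.mul_div_cancel _ hb0]
    exact hrep.symm

lemma biregOverpartitions_modEq_card {n : ℕ} (hn : n ≠ 0) :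
    biregOverpartitions 2 9 n ≡ 2 * #(sizePartitions n 1) + 4 * #(sizePartitions n 2)
      [MOD 8] := by
  rw [biregOverpartitions, sizePartitions, sizePartitions, card_filter, card_filter, mul_sum,
    mul_sum, ← sum_add_distrib]
  refine Nat.ModEq.sum fun P _ => ?_
  by_cases h : ∀ x ∈ P.parts, ¬ 2 ∣ x ∧ ¬ 9 ∣ x
  · have h0 : #P.parts.toFinset ≠ 0 := by
      intro h0
      have hparts : P.parts = 0 := by simpa using h0
      have := P.parts_sum
      rw [hparts, Multiset.sum_zero] at this
      exact hn this.symm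
    rw [if_pos h]
    simp only [and_iff_right h]
    generalize #P.parts.toFinset = r at h0
    match r, h0 with
    | 1, _ => rfl
    | 2, _ => rfl
    | r + 3, _ =>
      simp [Nat.modEq_zero_iff_dvd, pow_add]
  · rw [if_neg h, if_neg fun h' => h h'.1, if_neg fun h' => h h'.1]
    rfl

/-- For `n ≡ 1 (mod 6)` the number of `(2, 9)`-biregular overpartitions of `n` is congruent
modulo `8` to twice the sum of the divisors of `n`. -/
theorem biregOverpartitions_modEq_two_mul_sum_divisors {n : ℕ} (hn : n % 6 = 1) :
    biregOverpartitions 2 9 n ≡ 2 * ∑ a ∈ n.divisors, a [MOD 8] := by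
  have h := biregOverpartitions_modEq_card (n := n) (by omega)
  rw [card_sizePartitions_one (by omega), card_sizePartitions_two,
    admissibleDivisors_eq_divisors (by omega) (by omega)] at h
  have h1 := two_mul_card_twoSizeData n
  have h2 := four_dvd_sum_card_mul_card hn
  have h3 := sum_card_inter_add_card_divisors hn
  have h4 : ∑ a ∈ n.divisors, a ≡ #n.divisors [MOD 2] := by
    rw [card_eq_sum_ones]
    refine Nat.ModEq.sum fun a ha => ?_
    have : ¬ 2 ∣ a := fun h' => absurd (h'.trans (Nat.dvd_of_mem_divisors ha)) (by omega)
    simp only [Nat.ModEq]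
    omega
  simp only [Nat.ModEq] at *
  omega

lemma even_sum_divisors_of_mod_six {m : ℕ} (hm : m % 6 = 5) : Even (∑ a ∈ m.divisors, a) := by
  rw [even_sum_iff_even_card_odd, filter_true_of_mem]
  · exact even_card_divisors_of_mod_three (by omega)
  · intro a ha
    have := Nat.dvd_of_mem_divisors ha
    exact Odd.of_dvd_nat (Nat.odd_iff.2 (by omega)) this

lemma sum_divisors_sq_mul {p n : ℕ} (hp : p.Prime) (hp5 : p % 6 = 5) (hn : n % 6 = 1) :
    (∑ a ∈ (p ^ 2 * n).divisors, (a : ℤ)) ≡ -p * ∑ a ∈ n.divisors, (a : ℤ) [ZMOD 4] := by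
  obtain ⟨e, m, hpm, rfl⟩ := Nat.exists_eq_pow_mul_and_not_dvd (n := n) (by omega) p hp.ne_one
  have hcop : ∀ r, (p ^ r).Coprime m := fun r =>
    Nat.Coprime.pow_left r ((Nat.Prime.coprime_iff_not_dvd hp).2 hpm)
  have hsum : ∀ r, (∑ a ∈ (p ^ r * m).divisors, (a : ℤ)) =
      (∑ i ∈ range (r + 1), (p : ℤ) ^ i) * ∑ a ∈ m.divisors, (a : ℤ) := by
    intro r
    have := (hcop r).sum_divisors_mul
    rw [Nat.sum_divisors_prime_pow hp] at this
    simpa using congrArg (Nat.cast : ℕ → ℤ) this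
  rw [← mul_assoc, ← pow_add, add_comm 2 e, hsum, hsum]
  have hp2 : Odd (p : ℤ) := by
    rw [Int.odd_iff]; omega
  set S := ∑ i ∈ range (e + 1), (p : ℤ) ^ i with hS
  set M := ∑ a ∈ m.divisors, (a : ℤ) with hM
  have hgeom : ∑ i ∈ range (e + 2 + 1), (p : ℤ) ^ i = 1 + p + p ^ 2 * S := by
    rw [sum_range_succ', sum_range_succ', hS, mul_sum,
      sum_congr rfl fun i _ => show (p : ℤ) ^ (i + 1 + 1) = p ^ 2 * p ^ i by ring]
    ring
  rw [hgeom]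
  have heven : Even ((1 + p * S) * M) := by
    rcases Nat.even_or_odd e with he | he
    · refine Even.mul_right ?_ _
      have : Odd S := by
        have hnat : Odd (∑ i ∈ range (e + 1), p ^ i) := by
          rw [odd_sum_iff_odd_card_odd,
            filter_true_of_mem fun i _ => (Nat.odd_iff.2 (by omega) : Odd p).pow, card_range]
          exact he.add_one
        simpa [hS] using (Int.odd_coe_nat _).2 hnat
      exact odd_one.add_odd (hp2.mul this)
    · refine Even.mul_left ?_ _
      have hm : m % 6 = 5 := by
        obtain ⟨t, rfl⟩ := he
        have h1 : p ^ (2 * t + 1) ≡ 5 [MOD 6] := by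
          have hp' : p ≡ 5 [MOD 6] := hp5
          rw [pow_succ, pow_mul]
          have h25 : p ^ 2 ≡ 1 [MOD 6] := hp'.pow 2
          simpa using (h25.pow t).mul hp'
        have h2 : p ^ (2 * t + 1) * m ≡ 5 * m [MOD 6] := h1.mul_right m
        simp only [Nat.ModEq] at h2
        omega
      simpa [hM] using (Int.even_coe_nat _).2 (even_sum_divisors_of_mod_six hm)
  obtain ⟨x, hx⟩ := heven
  obtain ⟨y, hy⟩ := odd_one.add_odd hp2
  refine (Int.modEq_iff_dvd.2 ⟨-(y * x), ?_⟩)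
  linear_combination (-(1 + p : ℤ)) * hx - 2 * x * hy

theorem B29_mult_iter_mod8 (k : ℕ) (hk : 0 < k) (p : ℕ) (hp : p.Prime) (hp5 : p % 6 = 5)
    (n : ℕ) :
    (biregOverpartitions 2 9 (6 * p ^ (2 * k) * n + p ^ (2 * k)) : ℤ) ≡
      (-(p : ℤ)) ^ k * biregOverpartitions 2 9 (6 * n + 1) [ZMOD 8] := by
  have hmod : ∀ j : ℕ, (p ^ (2 * j) * (6 * n + 1)) % 6 = 1 := by
    intro j
    have h25 : p ^ 2 ≡ 1 [MOD 6] := Nat.ModEq.pow 2 (show p ≡ 5 [MOD 6] from hp5)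
    have h1 : p ^ (2 * j) ≡ 1 [MOD 6] := by
      simpa [pow_mul] using h25.pow j
    have h2 := h1.mul_right (6 * n + 1)
    simp only [Nat.ModEq] at h2
    omega
  have hbireg : ∀ N, N % 6 = 1 →
      (biregOverpartitions 2 9 N : ℤ) ≡ 2 * ∑ a ∈ N.divisors, (a : ℤ) [ZMOD 8] := by
    intro N hN
    have := Int.natCast_modEq_iff.2 (biregOverpartitions_modEq_two_mul_sum_divisors hN)
    simpa using this
  have hiter : ∀ j : ℕ, (∑ a ∈ (p ^ (2 * j) * (6 * n + 1)).divisors, (a : ℤ)) ≡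
      (-(p : ℤ)) ^ j * ∑ a ∈ (6 * n + 1).divisors, (a : ℤ) [ZMOD 4] := by
    intro j
    induction j with
    | zero => simp
    | succ j ih =>
      have h := (sum_divisors_sq_mul hp hp5 (hmod j)).trans (ih.mul_left (-(p : ℤ)))
      rw [← mul_assoc, ← mul_assoc, ← pow_add, ← pow_succ', add_comm 2] at h
      exact h
  rw [show 6 * p ^ (2 * k) * n + p ^ (2 * k) = p ^ (2 * k) * (6 * n + 1) by ring]
  refine (hbireg _ (hmod k)).trans (((hiter k).mul_left' (c := 2)).trans ?_)
  rw [mul_left_comm]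
  exact ((hbireg _ (by omega)).mul_left _).symm
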